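/- Let n ≥ 2, 1 ≤ j ≤ n, a ∈ ℂⁿ, let φ be a (0,j)-coefficient system on ℂⁿ, and fix distinct indices k ≠ l in {1,…,n}. Then Σ'_{|J|=j−1, k∈J} φ_{lJ} a_k − Σ'_{|J|=j−1, k∉J} φ_{lJ} · ( Σ_{m∈J} σ^{m(k∪(J∖m))}_{kJ} a_m ) = Σ'_{|J|=j−1, l∈J, k∉J} σ^{l(k∪(J∖l))}_{kJ} · ( Σ_{m=1}^n a_m φ_{mJ} ). -/

import Mathlib

open scoped BigOperators
open MeasureTheory

namespace HM

/-- The finset of strictly increasing multi-indices of length `q` with entries in `Fin n`. -/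
def Incr (n q : ℕ) : Finset (Fin q → Fin n) :=
  Finset.univ.filter (fun I => ∀ a b : Fin q, a < b → I a < I b)

/-- Prepend the index `k` to a `(q-1)`-tuple `J`, giving the `q`-tuple `kJ`. -/
def cons' {n : ℕ} (q : ℕ) (k : Fin n) (J : Fin (q - 1) → Fin n) : Fin q → Fin n :=
  fun i => if h : (i : ℕ) = 0 then k else J ⟨(i : ℕ) - 1, by have := i.isLt; omega⟩

/-- A (0,q)-coefficient system: an antisymmetric assignment of complex numbers to q-tuples
(hence vanishing on tuples with a repeated index). -/
def IsCoeff {n q : ℕ} (u : (Fin q → Fin n) → ℂ) : Prop :=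
  ∀ (σ : Equiv.Perm (Fin q)) (I : Fin q → Fin n),
    u (I ∘ σ) = ((Equiv.Perm.sign σ : ℤ) : ℂ) * u I

/-- `|u|²`, the sum of `|u_I|²` over strictly increasing multi-indices `I`. -/
noncomputable def nSq {n q : ℕ} (u : (Fin q → Fin n) → ℂ) : ℝ :=
  ∑ I ∈ Incr n q, ‖u I‖ ^ 2

/-- The Hessian form of a matrix `H` on coefficient systems:
`H(u,v) = Σ'_{|J|=q-1} Σ_{k,l} H_{lk} u_{lJ} conj(v_{kJ})`. -/
noncomputable def mForm {n : ℕ} (q : ℕ) (H : Matrix (Fin n) (Fin n) ℂ)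
    (u v : (Fin q → Fin n) → ℂ) : ℂ :=
  ∑ J ∈ Incr n (q - 1), ∑ k : Fin n, ∑ l : Fin n,
    H l k * u (cons' q l J) * star (v (cons' q k J))

/-- `σ^I_J`: the sign of the permutation rearranging `I` into `J`; `0` if `J` is not a
rearrangement of `I` (in particular `0` if `I` has a repeated entry). -/
def permSign {n p : ℕ} (I J : Fin p → Fin n) : ℤ :=
  if Function.Injective I then
    ∑ π : Equiv.Perm (Fin p), if J = I ∘ π then ((Equiv.Perm.sign π : ℤ)) else 0
  else 0

/-- The Wirtinger derivative `∂f/∂z_k` of a complex-valued function, via real Fréchet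
derivatives: `½(∂f/∂x_k − i ∂f/∂y_k)`. -/
noncomputable def dz {n : ℕ} (f : (Fin n → ℂ) → ℂ) (k : Fin n) (z : Fin n → ℂ) : ℂ :=
  (1/2 : ℂ) * (fderiv ℝ f z (Pi.single k 1) - Complex.I * fderiv ℝ f z (Pi.single k Complex.I))

/-- The Wirtinger derivative `∂f/∂z̄_k`: `½(∂f/∂x_k + i ∂f/∂y_k)`. -/
noncomputable def dzbar {n : ℕ} (f : (Fin n → ℂ) → ℂ) (k : Fin n) (z : Fin n → ℂ) : ℂ :=
  (1/2 : ℂ) * (fderiv ℝ f z (Pi.single k 1) + Complex.I * fderiv ℝ f z (Pi.single k Complex.I))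

/-- The mixed Wirtinger Hessian `∂²f/∂z_l∂z̄_k` of a real-valued function. -/
noncomputable def hessW {n : ℕ} (f : (Fin n → ℂ) → ℝ) (l k : Fin n) (z : Fin n → ℂ) : ℂ :=
  dz (fun w => dzbar (fun y => (f y : ℂ)) k w) l z

/-- The Hessian form `i∂∂̄f(u,u)(z) = Σ'_{|J|=q-1} Σ_{k,l} ∂²f/∂z_l∂z̄_k(z) u_{lJ} conj(u_{kJ})`. -/
noncomputable def hForm {n : ℕ} (q : ℕ) (f : (Fin n → ℂ) → ℝ)
    (u : (Fin q → Fin n) → ℂ) (z : Fin n → ℂ) : ℂ :=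
  ∑ J ∈ Incr n (q - 1), ∑ k : Fin n, ∑ l : Fin n,
    hessW f l k z * u (cons' q l J) * star (u (cons' q k J))

/-- Coefficient of `∂̄u` on the `(q+1)`-tuple `M`:
`(∂̄u)_M = Σ_k Σ'_{|J|=q} σ^{kJ}_M ∂u_J/∂z̄_k`. -/
noncomputable def dbarC {n : ℕ} (q : ℕ) (u : (Fin q → Fin n) → (Fin n → ℂ) → ℂ)
    (M : Fin (q + 1) → Fin n) (z : Fin n → ℂ) : ℂ :=
  ∑ k : Fin n, ∑ J ∈ Incr n q, ((permSign (cons' (q + 1) k J) M : ℤ) : ℂ) * dzbar (u J) k z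

/-- Coefficient of `ϑu` on the `(q-1)`-tuple `J`: `(ϑu)_J = −Σ_l ∂u_{lJ}/∂z_l`. -/
noncomputable def thetaC {n : ℕ} (q : ℕ) (u : (Fin q → Fin n) → (Fin n → ℂ) → ℂ)
    (J : Fin (q - 1) → Fin n) (z : Fin n → ℂ) : ℂ :=
  -∑ l : Fin n, dz (u (cons' q l J)) l z

/-- Pointwise `|∂̄u|²`. -/
noncomputable def dbarSq {n : ℕ} (q : ℕ) (u : (Fin q → Fin n) → (Fin n → ℂ) → ℂ)
    (z : Fin n → ℂ) : ℝ :=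
  ∑ M ∈ Incr n (q + 1), ‖dbarC q u M z‖ ^ 2

/-- Pointwise `|ϑu|²`. -/
noncomputable def thetaSq {n : ℕ} (q : ℕ) (u : (Fin q → Fin n) → (Fin n → ℂ) → ℂ)
    (z : Fin n → ℂ) : ℝ :=
  ∑ J ∈ Incr n (q - 1), ‖thetaC q u J z‖ ^ 2

/-- Remove the `i`-th entry of a `j`-tuple, giving a `(j-1)`-tuple. -/
def removeIdx {n j : ℕ} (I : Fin j → Fin n) (i : Fin j) : Fin (j - 1) → Fin n :=
  fun t => if (t : ℕ) < (i : ℕ) then I ⟨t, by have := t.isLt; omega⟩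
    else I ⟨(t : ℕ) + 1, by have := t.isLt; omega⟩

/-- The increasing `j`-tuple listing a finset `S` (with default `d` out of range). -/
def sortedTuple {n : ℕ} (j : ℕ) (S : Finset (Fin n)) (d : Fin n) : Fin j → Fin n :=
  fun t => (S.sort (· ≤ ·)).getD t d

end HM

/-!
For `m ∈ J` and `k ∉ J`, let `K = k ∪ (J ∖ m)` and let `K[k → m]` be the tuple `K` with its entry
`k` replaced by `m`. If `π` is the permutation with `J = K[k → m] ∘ π`, then `mK` is carried to
`kJ` by the transposition that moves `m` into the place of `k`, followed by `π`; hence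
`σ^{mK}_{kJ} = - sign π` and `σ^{mK}_{kJ} u_J = - u_{K[k → m]}` for every antisymmetric `u`. As
`J ↦ K` is a bijection from the `J` with `m ∈ J`, `k ∉ J` to the `K` with `k ∈ K`, `m ∉ K`, and
`φ_{l K[k → m]} = - φ_{m K[k → l]}`, both sides of the identity are equal to
`∑_m a_m Σ'_{K ∋ k} φ_{l K[k → m]}`.
-/

namespace HM

open Finset

section Replace

variable {ι α : Type*} [DecidableEq α] {k m : α} {K : ι → α}

/-- The tuple `K[k → m]`, in which every entry of `K` equal to `k` is replaced by `m`. -/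
def replaceEntry (k m : α) (K : ι → α) : ι → α :=
  Function.update id k m ∘ K

lemma replaceEntry_apply (k m : α) (K : ι → α) (i : ι) :
    replaceEntry k m K i = if K i = k then m else K i := by
  simp [replaceEntry, Function.update_apply]

lemma replaceEntry_self (k : α) (K : ι → α) : replaceEntry k k K = K :=
  congrArg (· ∘ K) (Function.update_eq_self k id)

lemma replaceEntry_replaceEntry (hm : ∀ i, K i ≠ m) :
    replaceEntry m k (replaceEntry k m K) = K := by
  ext i
  by_cases h : K i = k <;> simp [replaceEntry_apply, h, hm i]

lemma replaceEntry_injective (hK : Function.Injective K) (hm : ∀ i, K i ≠ m) :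
    Function.Injective (replaceEntry k m K) := by
  rw [← replaceEntry_replaceEntry (k := k) hm] at hK
  exact hK.of_comp

lemma exists_replaceEntry_eq (h : ∃ i, K i = k) : ∃ i, replaceEntry k m K i = m :=
  h.imp fun i hi => by simp [replaceEntry_apply, hi]

lemma replaceEntry_ne (hkm : k ≠ m) (i : ι) : replaceEntry k m K i ≠ k := by
  rw [replaceEntry_apply]
  split_ifs with h
  exacts [hkm.symm, h]

lemma image_replaceEntry [Fintype ι] (h : ∃ i, K i = k) :
    image (replaceEntry k m K) univ = insert m ((image K univ).erase k) := by
  ext x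
  simp only [mem_image, mem_univ, true_and, mem_insert, mem_erase, replaceEntry_apply]
  grind

lemma cons_replaceEntry_comp_swap {q : ℕ} {K : Fin q → α} (hK : Function.Injective K) (l m : α)
    (i : Fin q) :
    (Fin.cons l (replaceEntry (K i) m K) : Fin (q + 1) → α) ∘ Equiv.swap 0 i.succ =
      Fin.cons m (replaceEntry (K i) l K) := by
  funext x
  refine Fin.cases (by simp [replaceEntry_apply]) (fun i' => ?_) x
  obtain rfl | h := eq_or_ne i' i
  · simp [replaceEntry_apply]
  · have hswap : Equiv.swap 0 i.succ i'.succ = i'.succ :=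
      Equiv.swap_apply_of_ne_of_ne (Fin.succ_ne_zero i') (by simpa using h)
    simp [hswap, replaceEntry_apply, hK.ne h]

end Replace

section SortedTuples

variable {α : Type*} [LinearOrder α] {q : ℕ} {k m : α} {J : Fin q → α}

lemma strictMono_comp_sort (hJ : Function.Injective J) : StrictMono (J ∘ Tuple.sort J) :=
  (Tuple.monotone_sort J).strictMono_of_injective (hJ.comp (Tuple.sort J).injective)

/-- The increasing multi-index `k ∪ (J ∖ m)` for `m ∈ J` and `k ∉ J`, encoded as the sorted
`J[m → k]`. -/
def exchange (k m : α) (J : Fin q → α) : Fin q → α :=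
  replaceEntry m k J ∘ Tuple.sort (replaceEntry m k J)

lemma replaceEntry_exchange (hk : ∀ i, J i ≠ k) :
    replaceEntry k m (exchange k m J) = J ∘ Tuple.sort (replaceEntry m k J) :=
  congrArg (· ∘ Tuple.sort (replaceEntry m k J)) (replaceEntry_replaceEntry hk)

lemma exchange_exchange (hJ : StrictMono J) (hk : ∀ i, J i ≠ k) :
    exchange m k (exchange k m J) = J := by
  rw [exchange, replaceEntry_exchange hk, Tuple.comp_perm_comp_sort_eq_comp_sort]
  exact ((Tuple.comp_sort_eq_comp_iff_monotone (σ := 1)).2 hJ.monotone).symm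

lemma strictMono_exchange (hJ : Function.Injective J) (hk : ∀ i, J i ≠ k) :
    StrictMono (exchange k m J) :=
  strictMono_comp_sort (replaceEntry_injective hJ hk)

lemma exists_exchange_eq (hm : ∃ i, J i = m) : ∃ i, exchange k m J i = k :=
  (Tuple.sort (replaceEntry m k J)).surjective.exists.1 (exists_replaceEntry_eq hm)

lemma exchange_ne (hkm : k ≠ m) (i : Fin q) : exchange k m J i ≠ m :=
  replaceEntry_ne hkm.symm _

end SortedTuples

lemma cons_comp_perm {α : Type*} {q : ℕ} (k : α) (J : Fin q → α) (π : Equiv.Perm (Fin q)) :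
    (Fin.cons k (J ∘ π) : Fin (q + 1) → α) =
      (Fin.cons k J : Fin (q + 1) → α) ∘ Equiv.Perm.decomposeFin.symm (0, π) := by
  funext i
  refine Fin.cases ?_ (fun i => ?_) i <;> simp

lemma sum_sum_apply {ι α M : Type*} [Fintype ι] [Fintype α] [AddCommMonoid M]
    [∀ m, DecidablePred fun J : ι → α => ∃ i, J i = m] {s : Finset (ι → α)}
    (hs : ∀ J ∈ s, Function.Injective J) (f : (ι → α) → α → M) :
    ∑ J ∈ s, ∑ i, f J (J i) = ∑ m, ∑ J ∈ s with ∃ i, J i = m, f J m := by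
  classical
  calc ∑ J ∈ s, ∑ i, f J (J i)
    _ = ∑ J ∈ s, ∑ m ∈ image J univ, f J m :=
      sum_congr rfl fun J hJ => (sum_image (hs J hJ).injOn).symm
    _ = ∑ m, ∑ J ∈ s with ∃ i, J i = m, f J m := sum_comm' fun J m => by simp

section MultiIndices

variable {n q : ℕ} {J : Fin q → Fin n} {k m : Fin n}

lemma cons'_eq_cons (k : Fin n) (J : Fin q → Fin n) :
    cons' (q + 1) k J = (Fin.cons k J : Fin (q + 1) → Fin n) := by
  funext i
  refine Fin.cases ?_ (fun i => ?_) i <;> simp [cons']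

lemma mem_incr : J ∈ Incr n q ↔ StrictMono J := by
  simp [Incr, StrictMono]

lemma sortedTuple_image (hJ : Function.Injective J) (d : Fin n) :
    sortedTuple q (image J univ) d = J ∘ Tuple.sort J := by
  have hcard : #(image J univ) = q := by simp [card_image_of_injective _ hJ]
  have hsort : sortedTuple q (image J univ) d = (image J univ).orderEmbOfFin hcard := by
    funext t
    have ht : (t : ℕ) < ((image J univ).sort (· ≤ ·)).length := by simp [hcard]
    rw [sortedTuple, orderEmbOfFin_apply, List.getD_eq_getElem _ _ ht]
    rfl
  rw [hsort]
  exact (orderEmbOfFin_unique hcard (fun t => by simp) (strictMono_comp_sort hJ)).symm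

lemma sortedTuple_insert_erase (hJ : Function.Injective J) (hm : ∃ i, J i = m)
    (hk : ∀ i, J i ≠ k) (d : Fin n) :
    sortedTuple q (insert k ((image J univ).erase m)) d = exchange k m J := by
  rw [← image_replaceEntry hm, sortedTuple_image (replaceEntry_injective hJ hk), exchange]

lemma sum_exchange {M : Type*} [AddCommMonoid M] (hkm : k ≠ m) (g : (Fin q → Fin n) → M) :
    ∑ J ∈ Incr n q with (∃ i, J i = m) ∧ ∀ i, J i ≠ k, g (exchange k m J) =
      ∑ K ∈ Incr n q with (∃ i, K i = k) ∧ ∀ i, K i ≠ m, g K := by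
  have maps : ∀ {k m : Fin n}, k ≠ m →
      ∀ J ∈ (Incr n q).filter (fun J => (∃ i, J i = m) ∧ ∀ i, J i ≠ k),
        exchange k m J ∈ (Incr n q).filter (fun K => (∃ i, K i = k) ∧ ∀ i, K i ≠ m) := by
    intro k m hkm J hJ
    simp only [mem_filter, mem_incr] at hJ ⊢
    obtain ⟨hJ, hm, hk⟩ := hJ
    exact ⟨strictMono_exchange hJ.injective hk, exists_exchange_eq hm, exchange_ne hkm⟩
  have inv : ∀ {k m : Fin n},
      ∀ J ∈ (Incr n q).filter (fun J => (∃ i, J i = m) ∧ ∀ i, J i ≠ k),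
        exchange m k (exchange k m J) = J := by
    intro k m J hJ
    simp only [mem_filter, mem_incr] at hJ
    exact exchange_exchange hJ.1 hJ.2.2
  exact sum_nbij' (exchange k m) (exchange m k) (maps hkm) (maps hkm.symm) inv inv
    fun _ _ => rfl

end MultiIndices

section Antisymmetric

variable {n q : ℕ}

lemma permSign_self_comp {I : Fin q → Fin n} (hI : Function.Injective I)
    (π : Equiv.Perm (Fin q)) : permSign I (I ∘ π) = Equiv.Perm.sign π := by
  have h : ∀ ρ : Equiv.Perm (Fin q), I ∘ π = I ∘ ρ ↔ π = ρ := fun ρ =>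
    hI.comp_left.eq_iff.trans DFunLike.coe_fn_eq
  simp [permSign, hI, h]

lemma IsCoeff.eq_zero_of_not_injective {u : (Fin q → Fin n) → ℂ} (hu : IsCoeff u)
    {I : Fin q → Fin n} (hI : ¬ Function.Injective I) : u I = 0 := by
  obtain ⟨i, i', hII', hne⟩ := Function.not_injective_iff.1 hI
  have hswap := hu (Equiv.swap i i') I
  rw [Equiv.comp_swap_eq_update, hII', Function.update_eq_self, ← hII', Function.update_eq_self,
    Equiv.Perm.sign_swap hne] at hswap
  push_cast at hswap
  linear_combination hswap / 2

variable {φ : (Fin (q + 1) → Fin n) → ℂ} {K : Fin q → Fin n} {k m : Fin n}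

lemma IsCoeff.contract (hφ : IsCoeff φ) (l : Fin n) :
    IsCoeff fun J : Fin q → Fin n => φ (cons' (q + 1) l J) := by
  intro π J
  simp only [cons'_eq_cons]
  rw [cons_comp_perm, hφ, Equiv.Perm.decomposeFin.symm_sign, if_pos rfl, one_mul]

lemma IsCoeff.cons_replaceEntry_eq_neg (hφ : IsCoeff φ) (hK : Function.Injective K)
    (hk : ∃ i, K i = k) (l m : Fin n) :
    φ (cons' (q + 1) m (replaceEntry k l K)) = -φ (cons' (q + 1) l (replaceEntry k m K)) := by
  obtain ⟨i, rfl⟩ := hk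
  rw [cons'_eq_cons, cons'_eq_cons, ← cons_replaceEntry_comp_swap hK, hφ,
    Equiv.Perm.sign_swap (Fin.succ_ne_zero i).symm]
  simp

lemma permSign_cons_replaceEntry_comp (hK : Function.Injective K) (hk : ∃ i, K i = k)
    (hm : ∀ i, K i ≠ m) (π : Equiv.Perm (Fin q)) :
    permSign (Fin.cons m K : Fin (q + 1) → Fin n) (Fin.cons k (replaceEntry k m K ∘ π)) =
      -Equiv.Perm.sign π := by
  obtain ⟨i, rfl⟩ := hk
  have hinj : Function.Injective (Fin.cons m K : Fin (q + 1) → Fin n) :=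
    Fin.cons_injective_iff.2 ⟨by simpa using hm, hK⟩
  have hswap := cons_replaceEntry_comp_swap hK m (K i) i
  rw [replaceEntry_self] at hswap
  rw [cons_comp_perm, ← hswap, Function.comp_assoc, ← Equiv.Perm.coe_mul, permSign_self_comp hinj,
    Equiv.Perm.sign_mul, Equiv.Perm.sign_swap (Fin.succ_ne_zero i).symm,
    Equiv.Perm.decomposeFin.symm_sign, if_pos rfl]
  simp

/-- The sign `σ^{m(k∪(J∖m))}_{kJ}`, meant for `m ∈ J` and `k ∉ J`. -/
def exchangeSign (k m : Fin n) (J : Fin q → Fin n) : ℤ :=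
  permSign (cons' (q + 1) m (sortedTuple q (insert k ((image J univ).erase m)) k))
    (cons' (q + 1) k J)

lemma exchangeSign_mul {u : (Fin q → Fin n) → ℂ} (hu : IsCoeff u) {J : Fin q → Fin n}
    (hJ : Function.Injective J) (hkm : k ≠ m) (hm : ∃ i, J i = m) (hk : ∀ i, J i ≠ k) :
    exchangeSign k m J * u J = -u (replaceEntry k m (exchange k m J)) := by
  set π := Tuple.sort (replaceEntry m k J)
  have hJ_eq : replaceEntry k m (exchange k m J) ∘ π.symm = J := by
    rw [replaceEntry_exchange hk, Function.comp_assoc, Equiv.self_comp_symm, Function.comp_id]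
  have hsign : exchangeSign k m J = -(Equiv.Perm.sign π : ℤ) := by
    have h := permSign_cons_replaceEntry_comp (strictMono_exchange hJ hk).injective
      (exists_exchange_eq hm) (exchange_ne hkm) π.symm
    rwa [hJ_eq, Equiv.Perm.sign_symm, ← sortedTuple_insert_erase hJ hm hk k, ← cons'_eq_cons,
      ← cons'_eq_cons] at h
  rw [replaceEntry_exchange hk, hu, hsign]
  push_cast
  ring

lemma sum_exchangeSign_mul {u : (Fin q → Fin n) → ℂ} (hu : IsCoeff u) (hkm : k ≠ m) :
    ∑ J ∈ Incr n q with (∃ i, J i = m) ∧ ∀ i, J i ≠ k, exchangeSign k m J * u J =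
      -∑ K ∈ Incr n q with ∃ i, K i = k, u (replaceEntry k m K) := by
  have hzero : ∀ K : Fin q → Fin n, (∃ i, K i = k) → ¬ (∀ i, K i ≠ m) →
      u (replaceEntry k m K) = 0 := by
    rintro K ⟨i, hi⟩ hm
    obtain ⟨i', hi'⟩ := not_forall_not.1 hm
    refine hu.eq_zero_of_not_injective fun hinj => hkm ?_
    rw [← hi, ← hi', hinj (a₁ := i) (a₂ := i') (by simp [replaceEntry_apply, hi, hi'])]
  calc ∑ J ∈ Incr n q with (∃ i, J i = m) ∧ ∀ i, J i ≠ k, exchangeSign k m J * u J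
    _ = ∑ J ∈ Incr n q with (∃ i, J i = m) ∧ ∀ i, J i ≠ k,
          -u (replaceEntry k m (exchange k m J)) := by
      refine sum_congr rfl fun J hJ => ?_
      simp only [mem_filter, mem_incr] at hJ
      exact exchangeSign_mul hu hJ.1.injective hkm hJ.2.1 hJ.2.2
    _ = ∑ K ∈ Incr n q with (∃ i, K i = k) ∧ ∀ i, K i ≠ m, -u (replaceEntry k m K) :=
      sum_exchange hkm fun K => -u (replaceEntry k m K)
    _ = -∑ K ∈ Incr n q with ∃ i, K i = k, u (replaceEntry k m K) := by
      rw [← filter_filter, sum_filter_of_ne, sum_neg_distrib]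
      intro K hK hne
      by_contra hm
      exact hne (neg_eq_zero.2 (hzero K (mem_filter.1 hK).2 hm))

variable (a : Fin n → ℂ) {l : Fin n}

lemma sum_mul_sum_exchangeSign {u : (Fin q → Fin n) → ℂ} (hu : IsCoeff u) (k : Fin n) :
    ∑ J ∈ Incr n q with ∀ i, J i ≠ k, u J * ∑ i, exchangeSign k (J i) J * a (J i) =
      -∑ m ∈ univ.erase k, a m * ∑ K ∈ Incr n q with ∃ i, K i = k, u (replaceEntry k m K) := by
  have hinj : ∀ J ∈ (Incr n q).filter (fun J => ∀ i, J i ≠ k), Function.Injective J :=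
    fun J hJ => (mem_incr.1 (mem_filter.1 hJ).1).injective
  simp only [mul_sum]
  rw [sum_sum_apply hinj fun J m => u J * (exchangeSign k m J * a m), ← sum_neg_distrib]
  have hempty : {J ∈ (Incr n q).filter (fun J => ∀ i, J i ≠ k) | ∃ i, J i = k} = ∅ := by
    rw [filter_filter, filter_false_of_mem fun J _ h => not_exists.2 h.1 h.2]
  rw [← sum_erase univ (a := k) (by rw [hempty, sum_empty])]
  refine sum_congr rfl fun m hm => ?_
  rw [← mul_sum, ← mul_neg, ← sum_exchangeSign_mul hu (ne_of_mem_erase hm).symm, filter_filter,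
    mul_sum]
  simp only [and_comm, mul_comm, mul_left_comm]

lemma sum_exchangeSign_mul_sum (hφ : IsCoeff φ) (hkl : k ≠ l) :
    ∑ J ∈ Incr n q with (∃ i, J i = l) ∧ ∀ i, J i ≠ k,
        exchangeSign k l J * ∑ m, a m * φ (cons' (q + 1) m J) =
      ∑ m, a m * ∑ K ∈ Incr n q with ∃ i, K i = k, φ (cons' (q + 1) l (replaceEntry k m K)) := by
  have hu : IsCoeff fun J : Fin q → Fin n => ∑ m, a m * φ (cons' (q + 1) m J) := by
    intro π J
    rw [mul_sum]
    exact sum_congr rfl fun m _ =>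
      (congrArg (a m * ·) (hφ.contract m π J)).trans (mul_left_comm ..)
  rw [sum_exchangeSign_mul hu hkl, ← sum_neg_distrib]
  simp only [mul_sum]
  rw [sum_comm]
  refine sum_congr rfl fun K hK => ?_
  simp only [mem_filter, mem_incr] at hK
  rw [← sum_neg_distrib]
  refine sum_congr rfl fun m _ => ?_
  rw [hφ.cons_replaceEntry_eq_neg hK.1.injective hK.2, mul_neg, neg_neg]

end Antisymmetric

end HM

/-- the off-diagonal error-term computation from Lemma 4.3 (case `k ≠ l`). -/
theorem offdiagonal_error_term (n j : ℕ) (hn : 2 ≤ n) (hj1 : 1 ≤ j) (hjn : j ≤ n)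
    (a : Fin n → ℂ) (φ : (Fin j → Fin n) → ℂ) (hφ : HM.IsCoeff φ)
    (k l : Fin n) (hkl : k ≠ l) :
    (∑ J ∈ (HM.Incr n (j - 1)).filter (fun J => ∃ i, J i = k),
        φ (HM.cons' j l J) * a k)
      - ∑ J ∈ (HM.Incr n (j - 1)).filter (fun J => ∀ i, J i ≠ k),
          φ (HM.cons' j l J) * ∑ i : Fin (j - 1),
            ((HM.permSign
                (HM.cons' j (J i) (HM.sortedTuple (j - 1)
                  (insert k ((Finset.image J Finset.univ).erase (J i))) k))
                (HM.cons' j k J) : ℤ) : ℂ) * a (J i)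
    = ∑ J ∈ (HM.Incr n (j - 1)).filter (fun J => (∃ i, J i = l) ∧ ∀ i, J i ≠ k),
        ((HM.permSign
            (HM.cons' j l (HM.sortedTuple (j - 1)
              (insert k ((Finset.image J Finset.univ).erase l)) k))
            (HM.cons' j k J) : ℤ) : ℂ)
          * ∑ m : Fin n, a m * φ (HM.cons' j m J) := by
  obtain ⟨q, rfl⟩ := Nat.exists_eq_add_of_le' hj1
  let S (m : Fin n) : ℂ :=
    ∑ K ∈ HM.Incr n q with ∃ i, K i = k, φ (HM.cons' (q + 1) l (HM.replaceEntry k m K))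
  have term_k : ∑ J ∈ HM.Incr n q with ∃ i, J i = k, φ (HM.cons' (q + 1) l J) * a k =
      a k * S k := by
    simp only [S, HM.replaceEntry_self, Finset.mul_sum, mul_comm]
  calc
    _ = a k * S k - -∑ m ∈ Finset.univ.erase k, a m * S m :=
      congrArg₂ (· - ·) term_k (HM.sum_mul_sum_exchangeSign a (hφ.contract l) k)
    _ = ∑ m, a m * S m := by
      rw [sub_neg_eq_add]
      exact Finset.add_sum_erase _ (fun m => a m * S m) (Finset.mem_univ k)
    _ = _ := (HM.sum_exchangeSign_mul_sum a hφ hkl).symm
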